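/- (Expected weight enumerator of a random maximal-entanglement EAQEC code.) Let n ≥ 1 and 0 ≤ k ≤ n, and let 𝒱 be the (nonempty, finite) set of all F₂-subspaces S ⊆ V_n with dim S = 2(n−k) and S ∩ S^⊥ = {0}. Then for every integer w with 1 ≤ w ≤ n, Σ_{S ∈ 𝒱} |{v ∈ S^⊥ : wt(v) = w}| = |𝒱| · ((2^{2k}−1)/(2^{2n}−1)) · C(n,w) · 3^w; that is, the expected number of logical operators of weight w of a uniformly random maximal-entanglement [[n,k;n−k]] code is ((2^{2k}−1)/(2^{2n}−1))·C(n,w)·3^w. -/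

import Mathlib

open Finset

/-- The binary symplectic space modelling `n`-qubit Pauli operators modulo phases. -/
abbrev V (n : ℕ) := (Fin n → ZMod 2) × (Fin n → ZMod 2)

/-- The Pauli weight of `v = (x, z)`: the number of indices where `(x i, z i) ≠ (0,0)`. -/
def wt {n : ℕ} (v : V n) : ℕ :=
  (Finset.univ.filter fun i => ¬(v.1 i = 0 ∧ v.2 i = 0)).card

/-- The binary symplectic product. -/
def sympl {n : ℕ} (u v : V n) : ZMod 2 :=
  ∑ i, (u.1 i * v.2 i + u.2 i * v.1 i)

lemma sympl_add_left {n : ℕ} (a b w : V n) :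
    sympl (a + b) w = sympl a w + sympl b w := by
  simp only [sympl, Prod.fst_add, Prod.snd_add, Pi.add_apply, ← Finset.sum_add_distrib]
  exact Finset.sum_congr rfl fun i _ => by ring

lemma sympl_smul_left {n : ℕ} (c : ZMod 2) (a w : V n) :
    sympl (c • a) w = c * sympl a w := by
  simp only [sympl, Prod.smul_fst, Prod.smul_snd, Pi.smul_apply, smul_eq_mul,
    Finset.mul_sum]
  exact Finset.sum_congr rfl fun i _ => by ring

/-- The symplectic dual `W^⊥` of a subspace `W ⊆ V n`. -/
def sdual {n : ℕ} (W : Submodule (ZMod 2) (V n)) : Submodule (ZMod 2) (V n) where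
  carrier := {u | ∀ w ∈ W, sympl u w = 0}
  add_mem' := fun ha hb w hw => by
    rw [sympl_add_left, ha w hw, hb w hw, add_zero]
  zero_mem' := fun w hw => by simp [sympl]
  smul_mem' := fun c a ha w hw => by rw [sympl_smul_left, ha w hw, mul_zero]

open scoped Classical

lemma sympl_comm' {n : ℕ} (u v : V n) : sympl u v = sympl v u := by
  simp only [sympl]
  exact Finset.sum_congr rfl fun i _ => by ring

lemma sympl_add_right' {n : ℕ} (a b w : V n) :
    sympl w (a + b) = sympl w a + sympl w b := by
  rw [sympl_comm', sympl_add_left, sympl_comm' a, sympl_comm' b]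

lemma sympl_smul_right' {n : ℕ} (c : ZMod 2) (a w : V n) :
    sympl w (c • a) = c * sympl w a := by
  rw [sympl_comm', sympl_smul_left, sympl_comm' a]

lemma sympl_self' {n : ℕ} (u : V n) : sympl u u = 0 := by
  simp only [sympl]
  refine Finset.sum_eq_zero fun i _ => ?_
  rw [mul_comm (u.2 i)]
  exact CharTwo.add_self_eq_zero _

lemma sympl_sep {n : ℕ} (u : V n) (h : ∀ v, sympl u v = 0) : u = 0 := by
  refine Prod.ext (funext fun i => ?_) (funext fun i => ?_)
  · simpa [sympl, Pi.single_apply] using h (0, Pi.single i 1)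
  · simpa [sympl, Pi.single_apply] using h (Pi.single i 1, 0)

lemma zmod2_cases (a : ZMod 2) : a = 0 ∨ a = 1 := by
  revert a; decide

lemma exists_sympl_one {n : ℕ} (u : V n) (hu : u ≠ 0) : ∃ v, sympl u v = 1 := by
  by_contra! h
  exact hu (sympl_sep u fun v => (zmod2_cases _).resolve_right (h v))

lemma exists_sympl_one_both {n : ℕ} (u v : V n) (hu : u ≠ 0) (hv : v ≠ 0) :
    ∃ w, sympl u w = 1 ∧ sympl v w = 1 := by
  obtain ⟨a, ha⟩ := exists_sympl_one u hu
  obtain ⟨b, hb⟩ := exists_sympl_one v hv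
  rcases zmod2_cases (sympl v a) with h1 | h1
  · rcases zmod2_cases (sympl u b) with h2 | h2
    · exact ⟨a + b, by simp [sympl_add_right', ha, h2], by simp [sympl_add_right', hb, h1]⟩
    · exact ⟨b, h2, hb⟩
  · exact ⟨a, ha, h1⟩

/-- The symplectic bilinear form. -/
def symplB (n : ℕ) : LinearMap.BilinForm (ZMod 2) (V n) :=
  LinearMap.mk₂ (ZMod 2) sympl sympl_add_left sympl_smul_left
    (fun w a b => sympl_add_right' a b w) (fun c w a => sympl_smul_right' c a w)

lemma symplB_apply {n : ℕ} (u v : V n) : symplB n u v = sympl u v := rfl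

lemma symplB_nondeg (n : ℕ) : (symplB n).Nondegenerate := by
  refine ⟨fun x hx => sympl_sep x hx, fun x hx => sympl_sep x fun y => ?_⟩
  rw [sympl_comm']; exact hx y

lemma sdual_eq {n : ℕ} (S : Submodule (ZMod 2) (V n)) : sdual S = (symplB n).orthogonal S := by
  ext u
  rw [LinearMap.BilinForm.mem_orthogonal_iff]
  change (∀ w ∈ S, sympl u w = 0) ↔ ∀ w ∈ S, sympl w u = 0
  simp only [sympl_comm' u]

lemma finrank_V (n : ℕ) : Module.finrank (ZMod 2) (V n) = 2 * n := by
  simp [V]; ring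

lemma card_sdual {n k : ℕ} (hk : k ≤ n) (S : Submodule (ZMod 2) (V n))
    (hS : Module.finrank (ZMod 2) S = 2 * (n - k)) :
    (Finset.univ.filter (fun v => v ∈ sdual S)).card = 2 ^ (2 * k) := by
  have h1 : Module.finrank (ZMod 2) (sdual S) = 2 * k := by
    rw [sdual_eq, LinearMap.BilinForm.finrank_orthogonal (symplB_nondeg n), hS, finrank_V]
    omega
  have h2 := Module.card_eq_pow_finrank (K := ZMod 2) (V := sdual S)
  rw [h1, ZMod.card] at h2
  rw [← h2, Fintype.card_subtype]

/-- Symplectic transvection. -/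
def transv {n : ℕ} (a : V n) : V n →ₗ[ZMod 2] V n where
  toFun v := v + sympl v a • a
  map_add' u v := by rw [sympl_add_left, add_smul]; abel
  map_smul' c v := by simp [sympl_smul_left, mul_smul]

lemma transv_apply {n : ℕ} (a v : V n) : transv a v = v + sympl v a • a := rfl

lemma transv_invol {n : ℕ} (a v : V n) : transv a (transv a v) = v := by
  simp only [transv_apply, sympl_add_left, sympl_smul_left, sympl_self', mul_zero, add_zero]
  rw [add_assoc, ← add_smul, CharTwo.add_self_eq_zero, zero_smul, add_zero]

lemma transv_sympl {n : ℕ} (a u v : V n) : sympl (transv a u) (transv a v) = sympl u v := by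
  simp only [transv_apply, sympl_add_left, sympl_smul_left, sympl_self', sympl_add_right',
    sympl_smul_right', mul_zero, add_zero]
  rw [sympl_comm' a v, add_assoc, mul_comm, CharTwo.add_self_eq_zero, add_zero]

/-- Symplectic transvection as an equivalence. -/
def transvE {n : ℕ} (a : V n) : V n ≃ₗ[ZMod 2] V n :=
  LinearEquiv.ofInvolutive (transv a) (transv_invol a)

lemma transvE_sympl {n : ℕ} (a u v : V n) :
    sympl (transvE a u) (transvE a v) = sympl u v := transv_sympl a u v

lemma exists_isometry {n : ℕ} (u v : V n) (hu : u ≠ 0) (hv : v ≠ 0) :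
    ∃ e : V n ≃ₗ[ZMod 2] V n, (∀ x y, sympl (e x) (e y) = sympl x y) ∧ e u = v := by
  have key : ∀ u v : V n, sympl u v = 1 → transvE (u + v) u = v := by
    intro u v h
    change u + sympl u (u + v) • (u + v) = v
    rw [sympl_add_right', h, sympl_self', zero_add, one_smul, ← add_assoc]
    have : u + u = 0 := by
      rw [← two_smul (ZMod 2) u]
      have : (2 : ZMod 2) = 0 := by decide
      rw [this, zero_smul]
    rw [this, zero_add]
  obtain ⟨w, h1, h2⟩ := exists_sympl_one_both u v hu hv
  refine ⟨(transvE (u + w)).trans (transvE (w + v)), fun x y => ?_, ?_⟩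
  · simp only [LinearEquiv.trans_apply, transvE_sympl]
  · rw [LinearEquiv.trans_apply, key u w h1, key w v (by rw [sympl_comm', h2])]

lemma sdual_map {n : ℕ} (e : V n ≃ₗ[ZMod 2] V n) (he : ∀ x y, sympl (e x) (e y) = sympl x y)
    (S : Submodule (ZMod 2) (V n)) (u : V n) :
    e u ∈ sdual (S.map (e : V n →ₗ[ZMod 2] V n)) ↔ u ∈ sdual S := by
  change (∀ w ∈ S.map (e : V n →ₗ[ZMod 2] V n), sympl (e u) w = 0) ↔ ∀ w ∈ S, sympl u w = 0
  constructor
  · intro h w hw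
    rw [← he]
    exact h _ (Submodule.mem_map_of_mem hw)
  · rintro h _ ⟨w, hw, rfl⟩
    exact (he u w).trans (h w hw)

lemma inf_sdual_map {n : ℕ} (e : V n ≃ₗ[ZMod 2] V n)
    (he : ∀ x y, sympl (e x) (e y) = sympl x y)
    (S : Submodule (ZMod 2) (V n)) (h : S ⊓ sdual S = ⊥) :
    S.map (e : V n →ₗ[ZMod 2] V n) ⊓ sdual (S.map (e : V n →ₗ[ZMod 2] V n)) = ⊥ := by
  rw [Submodule.eq_bot_iff] at h ⊢
  rintro _ ⟨⟨x, hx, rfl⟩, h2⟩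
  have h3 := (sdual_map e he S x).1 h2
  rw [h x ⟨hx, h3⟩, map_zero]

lemma count_le {n m : ℕ} (𝒱 : Finset (Submodule (ZMod 2) (V n)))
    (h𝒱 : ∀ S : Submodule (ZMod 2) (V n),
      S ∈ 𝒱 ↔ (Module.finrank (ZMod 2) S = m ∧ S ⊓ sdual S = ⊥))
    (u v : V n) (hu : u ≠ 0) (hv : v ≠ 0) :
    (𝒱.filter (fun S => u ∈ sdual S)).card ≤ (𝒱.filter (fun S => v ∈ sdual S)).card := by
  obtain ⟨e, he, rfl⟩ := exists_isometry u v hu hv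
  refine Finset.card_le_card_of_injOn (fun S => S.map (e : V n →ₗ[ZMod 2] V n)) ?_ ?_
  · intro S hS
    simp only [Finset.coe_filter, Set.mem_ofPred_eq, h𝒱] at hS ⊢
    refine ⟨⟨?_, inf_sdual_map e he S hS.1.2⟩, (sdual_map e he S u).2 hS.2⟩
    rw [← hS.1.1]
    exact LinearEquiv.finrank_map_eq e S
  · intro S _ T _ h
    exact Submodule.map_injective_of_injective e.injective h

/-- The support of a Pauli vector. -/
def psupp {n : ℕ} (v : V n) : Finset (Fin n) :=
  Finset.univ.filter fun i => ¬(v.1 i = 0 ∧ v.2 i = 0)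

lemma card_psupp {n : ℕ} (T : Finset (Fin n)) :
    (Finset.univ.filter (fun v : V n => psupp v = T)).card = 3 ^ T.card := by
  let P : Finset (Fin n → ZMod 2 × ZMod 2) :=
    Fintype.piFinset fun i => if i ∈ T then Finset.univ.erase 0 else {0}
  have hP : P.card = 3 ^ T.card := by
    rw [Fintype.card_piFinset]
    have : ∀ i, (if i ∈ T then (Finset.univ.erase 0 : Finset (ZMod 2 × ZMod 2)) else {0}).card
        = if i ∈ T then 3 else 1 := by
      intro i
      split_ifs
      · rw [Finset.card_erase_of_mem (Finset.mem_univ _), Finset.card_univ]; simp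
      · simp
    simp only [this]
    rw [Finset.prod_ite_mem]; simp
  rw [← hP]
  refine Finset.card_bij' (fun v _ i => (v.1 i, v.2 i)) (fun f _ => (fun i => (f i).1, fun i => (f i).2))
    ?_ ?_ ?_ ?_
  · intro v hv
    simp only [Finset.mem_filter, Finset.mem_univ, true_and] at hv
    subst hv
    rw [Fintype.mem_piFinset]
    intro i
    by_cases h : i ∈ psupp v
    · rw [if_pos h]
      simpa [psupp, Prod.ext_iff] using h
    · rw [if_neg h]
      simpa [psupp, Prod.ext_iff] using h
  · intro f hf
    rw [Fintype.mem_piFinset] at hf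
    simp only [Finset.mem_filter, Finset.mem_univ, true_and]
    ext i
    have := hf i
    by_cases h : i ∈ T
    · rw [if_pos h] at this
      simpa [psupp, Prod.ext_iff, h] using this
    · rw [if_neg h] at this
      simpa [psupp, Prod.ext_iff, h] using this
  · intro v _; rfl
  · intro f _; rfl

lemma card_wt (n w : ℕ) :
    (Finset.univ.filter (fun v : V n => wt v = w)).card = n.choose w * 3 ^ w := by
  rw [Finset.card_eq_sum_card_fiberwise (f := psupp) (t := Finset.powersetCard w Finset.univ)]
  · rw [Finset.sum_congr rfl (g := fun _ => 3 ^ w)]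
    · simp
    · intro T hT
      have hT' := (Finset.mem_powersetCard.1 hT).2
      rw [← hT', ← card_psupp T, Finset.filter_filter]
      congr 1
      ext v
      simp only [Finset.mem_filter, Finset.mem_univ, true_and, and_iff_right_iff_imp]
      rintro rfl
      rfl
  · intro v hv
    have hv' : wt v = w := by simpa using hv
    exact Finset.mem_coe.2 (Finset.mem_powersetCard.2 ⟨Finset.subset_univ _, hv'⟩)

lemma wt_zero' (n : ℕ) : wt (0 : V n) = 0 := by simp [wt]

/-- Expected weight enumerator of a random maximal-entanglement
`[[n,k;n−k]]` EAQEC code: for `1 ≤ w ≤ n`, the expected number of logical operators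
of weight `w` is `((2^{2k}−1)/(2^{2n}−1)) C(n,w) 3^w`. -/
theorem expected_weight_enumerator_random_code (n k : ℕ) (hn : 1 ≤ n) (hk : k ≤ n)
    (𝒱 : Finset (Submodule (ZMod 2) (V n)))
    (h𝒱 : ∀ S : Submodule (ZMod 2) (V n),
      S ∈ 𝒱 ↔ (Module.finrank (ZMod 2) S = 2 * (n - k) ∧ S ⊓ sdual S = ⊥))
    (hne : 𝒱.Nonempty)
    (w : ℕ) (hw1 : 1 ≤ w) (hwn : w ≤ n) :
    (∑ S ∈ 𝒱, ((Finset.univ.filter (fun v => v ∈ sdual S ∧ wt v = w)).card : ℚ)) =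
      (𝒱.card : ℚ) * ((2 ^ (2 * k) - 1) / (2 ^ (2 * n) - 1)) *
        (n.choose w) * 3 ^ w := by
  have hpos : (2 : ℚ) ^ (2 * n) - 1 ≠ 0 := by
    have : (1 : ℚ) < 2 ^ (2 * n) := one_lt_pow₀ (by norm_num) (by omega)
    linarith
  let c : V n → ℕ := fun v => (𝒱.filter (fun S => v ∈ sdual S)).card
  obtain ⟨C, hC⟩ : ∃ C : ℕ, ∀ v : V n, v ≠ 0 → c v = C := by
    by_cases h : ∃ u : V n, u ≠ 0
    · obtain ⟨u, hu⟩ := h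
      exact ⟨c u, fun v hv => le_antisymm (count_le 𝒱 h𝒱 v u hv hu) (count_le 𝒱 h𝒱 u v hu hv)⟩
    · push Not at h
      exact ⟨0, fun v hv => absurd (h v) hv⟩
  have swap : ∀ (P : V n → Prop) [DecidablePred P],
      ∑ S ∈ 𝒱, (Finset.univ.filter (fun v => v ∈ sdual S ∧ P v)).card
        = ∑ v ∈ Finset.univ.filter P, c v := by
    intro P _
    have h1 : ∀ S : Submodule (ZMod 2) (V n),
        (Finset.univ.filter (fun v => v ∈ sdual S ∧ P v)).card
          = ((Finset.univ.filter P).filter (fun v => v ∈ sdual S)).card := by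
      intro S
      rw [Finset.filter_filter]
      congr 1
      ext v
      simp [and_comm]
    simp only [h1]
    exact Finset.sum_card_bipartiteAbove_eq_sum_card_bipartiteBelow
      (fun (S : Submodule (ZMod 2) (V n)) (v : V n) => v ∈ sdual S)
  have hA : ∑ S ∈ 𝒱, (Finset.univ.filter (fun v => v ∈ sdual S ∧ wt v = w)).card
      = n.choose w * 3 ^ w * C := by
    have h0 := swap (fun v => wt v = w)
    have h1 : ∑ v ∈ Finset.univ.filter (fun v : V n => wt v = w), c v
        = ∑ v ∈ Finset.univ.filter (fun v : V n => wt v = w), C := by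
      refine Finset.sum_congr rfl fun v hv => hC v ?_
      rintro rfl
      have := (Finset.mem_filter.1 hv).2
      rw [wt_zero'] at this
      omega
    rw [Finset.sum_const, smul_eq_mul] at h1
    have h2 := card_wt n w
    rw [h0, h1, h2]
  have hB : 𝒱.card * (2 ^ (2 * k) - 1) = (2 ^ (2 * n) - 1) * C := by
    have h0 := swap (fun v => v ≠ 0)
    have h1 : ∑ v ∈ Finset.univ.filter (fun v : V n => v ≠ 0), c v
        = ∑ v ∈ Finset.univ.filter (fun v : V n => v ≠ 0), C :=
      Finset.sum_congr rfl fun v hv => hC v (Finset.mem_filter.1 hv).2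
    have h2 : ∀ S ∈ 𝒱, (Finset.univ.filter (fun v => v ∈ sdual S ∧ v ≠ 0)).card
        = 2 ^ (2 * k) - 1 := by
      intro S hS
      rw [← card_sdual hk S ((h𝒱 S).1 hS).1,
        ← Finset.card_erase_of_mem (a := (0 : V n)) (by simp)]
      congr 1
      ext v
      simp [and_comm]
    have h3 : (Finset.univ.filter (fun v : V n => v ≠ 0)).card = 2 ^ (2 * n) - 1 := by
      have h4 := Module.card_eq_pow_finrank (K := ZMod 2) (V := V n)
      rw [finrank_V, ZMod.card] at h4
      rw [← h4, ← Finset.card_univ, ← Finset.card_erase_of_mem (a := (0 : V n)) (by simp)]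
      congr 1
      ext v
      simp
    rw [Finset.sum_congr rfl h2, h1, Finset.sum_const, Finset.sum_const, h3] at h0
    simpa using h0
  have hB' : (𝒱.card : ℚ) * (2 ^ (2 * k) - 1) = (2 ^ (2 * n) - 1) * C := by
    have := congrArg (Nat.cast : ℕ → ℚ) hB
    rw [Nat.cast_mul, Nat.cast_mul, Nat.cast_sub Nat.one_le_two_pow,
      Nat.cast_sub Nat.one_le_two_pow] at this
    simpa using this
  have hA' := congrArg (Nat.cast : ℕ → ℚ) hA
  rw [Nat.cast_sum] at hA'
  rw [hA']
  push_cast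
  rw [← mul_div_assoc, hB', mul_div_assoc, mul_comm _ ((C : ℚ) / _), div_mul_cancel₀ _ hpos]
  ring
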